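/- Assume the standing assumptions and let β ∈ ℝ. If NW = ∅, or if ∑_{n=0}^∞ A^n_{uu} e^{-nβ} < ∞ for some u ∈ NW, then ∑_{n=0}^∞ A^n_{vw} e^{-nβ} < ∞ for all v, w ∈ V. -/

import Mathlib

open scoped ENNReal
open Filter

variable {V : Type*}

/-- The set of vertices of the graph of `A` that emit no edges or infinitely many edges. -/
def VInf (A : V → V → ℝ≥0∞) : Set V :=
  {v | {w | A v w ≠ 0} = ∅ ∨ {w | A v w ≠ 0}.Infinite}

/-- A set of vertices is hereditary if every edge with source in it has range in it. -/
def Hereditary (A : V → V → ℝ≥0∞) (H : Set V) : Prop :=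
  ∀ ⦃v w : V⦄, v ∈ H → A v w ≠ 0 → w ∈ H

/-- A set of vertices is saturated if it contains every finite emitter all of whose
out-neighbours lie in it. -/
def Saturated (A : V → V → ℝ≥0∞) (H : Set V) : Prop :=
  ∀ v : V, v ∉ VInf A → (∀ w, A v w ≠ 0 → w ∈ H) → v ∈ H

/-- `A` is cofinal if the only hereditary and saturated subsets are `∅` and `V`. -/
def Cofinal (A : V → V → ℝ≥0∞) : Prop :=
  ∀ H : Set V, Hereditary A H → Saturated A H → H = ∅ ∨ H = Set.univ

/-- Matrix powers of `A`, with entries in `[0,∞]`. -/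
noncomputable def Apow [DecidableEq V] (A : V → V → ℝ≥0∞) : ℕ → V → V → ℝ≥0∞
  | 0 => fun v w => if v = w then 1 else 0
  | n + 1 => fun v w => ∑' u, A v u * Apow A n u w

/-- `e^β` as an extended nonnegative real. -/
noncomputable def expb (β : ℝ) : ℝ≥0∞ := ENNReal.ofReal (Real.exp β)

/-- `e^{-nβ}` as an extended nonnegative real. -/
noncomputable def expn (β : ℝ) (n : ℕ) : ℝ≥0∞ := ENNReal.ofReal (Real.exp (-(n : ℝ) * β))

/-- A vector `ξ : V → [0,∞)` is almost `β`-harmonic for `A` if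
`∑_w A_{vw} ξ_w = e^β ξ_v` off `V_∞` and `∑_w A_{vw} ξ_w ≤ e^β ξ_v` on `V_∞`. -/
def IsAlmostHarmonic (A : V → V → ℝ≥0∞) (β : ℝ) (ξ : V → ℝ≥0∞) : Prop :=
  (∀ v, ξ v ≠ ⊤) ∧
  (∀ v, v ∉ VInf A → ∑' w, A v w * ξ w = expb β * ξ v) ∧
  (∀ v, v ∈ VInf A → ∑' w, A v w * ξ w ≤ expb β * ξ v)

/-- A vector `ξ : V → [0,∞)` is `β`-harmonic for `A` if `∑_w A_{vw} ξ_w = e^β ξ_v`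
for every vertex `v`. -/
def IsHarmonic (A : V → V → ℝ≥0∞) (β : ℝ) (ξ : V → ℝ≥0∞) : Prop :=
  (∀ v, ξ v ≠ ⊤) ∧ ∀ v, ∑' w, A v w * ξ w = expb β * ξ v

/-- The non-wandering vertices: those admitting a loop of positive length. -/
def NW (A : V → V → ℝ≥0∞) : Set V :=
  {v | Relation.TransGen (fun a b => A a b ≠ 0) v v}

/-- Standing assumptions i)–iii): `A` is cofinal, the graph has no sinks, the entries of
`A` are finite and all powers of `A` have finite entries. -/
def Standing [DecidableEq V] (A : V → V → ℝ≥0∞) : Prop :=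
  Cofinal A ∧ (∀ v, ∃ w, A v w ≠ 0) ∧ (∀ v w, A v w ≠ ⊤) ∧
    ∀ (n : ℕ) (v w : V), Apow A n v w ≠ ⊤

/-- A function `k` supported on `V_∞` is `β`-summable when
`∑_{u ∈ V_∞} ∑_n e^{-nβ} A^n_{uu} k_u < ∞`. -/
def BSummable [DecidableEq V] (A : V → V → ℝ≥0∞) (β : ℝ) (k : V → ℝ≥0∞) : Prop :=
  (∀ u, u ∉ VInf A → k u = 0) ∧ (∑' u, ∑' n, expn β n * Apow A n u u * k u) ≠ ⊤

/-- `k̂_v = ∑_{u ∈ V_∞} ∑_n e^{-nβ} A^n_{vu} k_u` (for `k` supported on `V_∞`). -/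
noncomputable def khat [DecidableEq V] (A : V → V → ℝ≥0∞) (β : ℝ) (k : V → ℝ≥0∞) (v : V) :
    ℝ≥0∞ :=
  ∑' u, ∑' n, expn β n * Apow A n v u * k u

/-- The first-return quantities `r_{vw}(n)`: `r_{vw}(0) = 0`, `r_{vw}(1) = A_{vw}` and
`r_{vw}(n+1) = ∑_{u ≠ w} A_{vu} r_{uw}(n)` for `n ≥ 1`. -/
noncomputable def fr [DecidableEq V] (A : V → V → ℝ≥0∞) (w : V) : ℕ → V → ℝ≥0∞
  | 0 => fun _ => 0
  | 1 => fun v => A v w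
  | n + 2 => fun v => ∑' u, if u = w then 0 else A v u * fr A w (n + 1) u

/-!
Write `G z v w = ∑ₙ (Aⁿ)_{vw} zⁿ`, with `z = e^{-β}`. The resolvent identity
`G = 1 + z A G` shows that, for fixed `w`, the set of `v` with `G z v w < ∞` is hereditary and
saturated, so by cofinality a column of `G` with one finite entry is finite throughout. Such an
entry always exists: if `w` is wandering then `G z w w = 1`; if some `u ∈ NW` has
`G z u u < ∞`, then cofinality yields a path from `w` to `u`, and the other resolvent identity
`G = 1 + z G A` carries finiteness backwards along it, from `G z u u` to `G z u w`.
-/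

/-- There is a path of positive length from `v` to `w` in the graph of `A`, so that
`v ∈ NW A` unfolds to `Reaches A v v`. -/
abbrev Reaches (A : V → V → ℝ≥0∞) (v w : V) : Prop :=
  Relation.TransGen (fun a b => A a b ≠ 0) v w

section Cofinality

variable {A : V → V → ℝ≥0∞}

lemma Cofinal.mem_of_mem (hcof : Cofinal A) {H : Set V} (hher : Hereditary A H)
    (hsat : Saturated A H) {v₀ : V} (hv₀ : v₀ ∈ H) (v : V) : v ∈ H := by
  obtain hempty | huniv := hcof H hher hsat
  · exact absurd hv₀ (Set.eq_empty_iff_forall_notMem.mp hempty v₀)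
  · exact huniv ▸ Set.mem_univ v

lemma hereditary_not_reaches (w : V) : Hereditary A {v | ¬ Reaches A v w} :=
  fun _ _ hv hvu huw => hv (.head hvu huw)

lemma saturated_not_reaches {w : V} (hw : w ∈ NW A) : Saturated A {v | ¬ Reaches A v w} := by
  intro v _ hout hvw
  obtain ⟨u, hvu, huw⟩ := Relation.TransGen.head'_iff.mp hvw
  obtain rfl | huw := Relation.reflTransGen_iff_eq_or_transGen.mp huw
  · exact hout _ hvu hw
  · exact hout u hvu huw

lemma Cofinal.reaches_of_mem_NW (hcof : Cofinal A) {w : V} (hw : w ∈ NW A) (v : V) :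
    Reaches A v w := by
  by_contra hv
  exact hcof.mem_of_mem (hereditary_not_reaches w) (saturated_not_reaches hw) hv w hw

end Cofinality

section Powers

variable [DecidableEq V] {A : V → V → ℝ≥0∞}

lemma Apow_succ_eq_tsum_Apow_mul (n : ℕ) (v w : V) :
    Apow A (n + 1) v w = ∑' u, Apow A n v u * A u w := by
  induction n generalizing v with
  | zero => simp [Apow]
  | succ n ih =>
    calc Apow A (n + 2) v w
        = ∑' x, ∑' u, A v x * (Apow A n x u * A u w) := by
          rw [Apow]
          simp only [ih, ENNReal.tsum_mul_left]
      _ = ∑' u, ∑' x, A v x * Apow A n x u * A u w := by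
          rw [ENNReal.tsum_comm]
          simp only [mul_assoc]
      _ = ∑' u, Apow A (n + 1) v u * A u w := by
          simp only [Apow, ENNReal.tsum_mul_right]

lemma reaches_of_Apow_succ_ne_zero {n : ℕ} {v w : V} (h : Apow A (n + 1) v w ≠ 0) :
    Reaches A v w := by
  induction n generalizing v with
  | zero => exact .single (by simpa [Apow] using h)
  | succ n ih =>
    rw [Apow, Ne, ENNReal.tsum_eq_zero, not_forall] at h
    obtain ⟨u, hu⟩ := h
    exact .head (left_ne_zero_of_mul hu) (ih (right_ne_zero_of_mul hu))

end Powers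

section Green

variable [DecidableEq V]

/-- The Green function `∑ₙ (Aⁿ)_{vw} zⁿ` of `A`, as a power series in `z ∈ [0,∞]`; the theorem
is about `z = e^{-β}`. -/
noncomputable def green (A : V → V → ℝ≥0∞) (z : ℝ≥0∞) (v w : V) : ℝ≥0∞ :=
  ∑' n : ℕ, Apow A n v w * z ^ n

lemma tsum_Apow_mul_expn (A : V → V → ℝ≥0∞) (β : ℝ) (v w : V) :
    ∑' n : ℕ, Apow A n v w * expn β n = green A (ENNReal.ofReal (Real.exp (-β))) v w := by
  refine tsum_congr fun n => ?_
  rw [expn, ← ENNReal.ofReal_pow (Real.exp_pos _).le, ← Real.exp_nat_mul, neg_mul_comm]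

lemma green_eq_add_tsum_succ (A : V → V → ℝ≥0∞) (z : ℝ≥0∞) (v w : V) :
    green A z v w = (if v = w then 1 else 0) + ∑' n : ℕ, Apow A (n + 1) v w * z ^ (n + 1) := by
  rw [green, tsum_eq_zero_add' ENNReal.summable, pow_zero, mul_one, Apow]

lemma green_eq_add_mul_tsum_mul_green (A : V → V → ℝ≥0∞) (z : ℝ≥0∞) (v w : V) :
    green A z v w = (if v = w then 1 else 0) + z * ∑' u, A v u * green A z u w := by
  rw [green_eq_add_tsum_succ]
  simp only [green, Apow, ← ENNReal.tsum_mul_left, ← ENNReal.tsum_mul_right]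
  rw [ENNReal.tsum_comm]
  exact congrArg _ (tsum_congr fun u => tsum_congr fun n => by ring)

lemma green_eq_add_mul_tsum_green_mul (A : V → V → ℝ≥0∞) (z : ℝ≥0∞) (v w : V) :
    green A z v w = (if v = w then 1 else 0) + z * ∑' u, green A z v u * A u w := by
  rw [green_eq_add_tsum_succ]
  simp only [green, Apow_succ_eq_tsum_Apow_mul, ← ENNReal.tsum_mul_left,
    ← ENNReal.tsum_mul_right]
  rw [ENNReal.tsum_comm]
  exact congrArg _ (tsum_congr fun u => tsum_congr fun n => by ring)

variable {A : V → V → ℝ≥0∞} {z : ℝ≥0∞}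

lemma hereditary_green_ne_top (hz : z ≠ 0) (w : V) : Hereditary A {v | green A z v w ≠ ⊤} := by
  intro v u hv hvu hu
  have hsum : ∑' x, A v x * green A z x w = ⊤ :=
    ENNReal.tsum_eq_top_of_eq_top ⟨u, by rw [hu, ENNReal.mul_top hvu]⟩
  apply hv
  rw [green_eq_add_mul_tsum_mul_green, hsum, ENNReal.mul_top hz, add_top]

lemma saturated_green_ne_top (hA : ∀ v w, A v w ≠ ⊤) (hz : z ≠ ⊤) (w : V) :
    Saturated A {v | green A z v w ≠ ⊤} := by
  intro v hv hout
  have hfin : {u | A v u ≠ 0}.Finite := Set.not_infinite.mp fun hinf => hv (.inr hinf)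
  have hsupp : ∀ u ∉ hfin.toFinset, A v u * green A z u w = 0 := fun u hu => by
    rw [Set.Finite.mem_toFinset, Set.notMem_ofPred_iff, not_not] at hu
    rw [hu, zero_mul]
  have hsum : ∑' u, A v u * green A z u w ≠ ⊤ := by
    rw [tsum_eq_sum hsupp]
    exact ENNReal.sum_ne_top.mpr fun u hu =>
      ENNReal.mul_ne_top (hA v u) (hout u (hfin.mem_toFinset.mp hu))
  rw [Set.mem_ofPred_eq, green_eq_add_mul_tsum_mul_green]
  exact ENNReal.add_ne_top.mpr ⟨by split_ifs <;> simp, ENNReal.mul_ne_top hz hsum⟩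

lemma Cofinal.green_ne_top (hcof : Cofinal A) (hA : ∀ v w, A v w ≠ ⊤) (hz₀ : z ≠ 0)
    (hz : z ≠ ⊤) {v₀ w : V} (h₀ : green A z v₀ w ≠ ⊤) (v : V) : green A z v w ≠ ⊤ :=
  hcof.mem_of_mem (hereditary_green_ne_top hz₀ w) (saturated_green_ne_top hA hz w) h₀ v

lemma green_ne_top_of_edge (hz : z ≠ 0) {u v w : V} (hvw : A v w ≠ 0)
    (hw : green A z u w ≠ ⊤) : green A z u v ≠ ⊤ := by
  intro hv
  have hsum : ∑' x, green A z u x * A x w = ⊤ :=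
    ENNReal.tsum_eq_top_of_eq_top ⟨v, by rw [hv, ENNReal.top_mul hvw]⟩
  apply hw
  rw [green_eq_add_mul_tsum_green_mul, hsum, ENNReal.mul_top hz, add_top]

lemma green_ne_top_of_reaches (hz : z ≠ 0) {u v w : V} (hvw : Reaches A v w)
    (hw : green A z u w ≠ ⊤) : green A z u v ≠ ⊤ := by
  induction hvw using Relation.TransGen.head_induction_on with
  | single hvw => exact green_ne_top_of_edge hz hvw hw
  | head hvx _ ih => exact green_ne_top_of_edge hz hvx ih

lemma green_self_of_notMem_NW {w : V} (hw : w ∉ NW A) : green A z w w = 1 := by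
  have hpow (n : ℕ) : Apow A (n + 1) w w = 0 :=
    not_not.mp fun hne => hw (reaches_of_Apow_succ_ne_zero hne)
  simp [green_eq_add_tsum_succ, hpow]

end Green

theorem stmt16_general [DecidableEq V] (A : V → V → ℝ≥0∞) (hcof : Cofinal A)
    (hA : ∀ v w, A v w ≠ ⊤) (β : ℝ)
    (h : NW A = ∅ ∨ ∃ u ∈ NW A, ∑' n : ℕ, Apow A n u u * expn β n ≠ ⊤) (v w : V) :
    ∑' n : ℕ, Apow A n v w * expn β n ≠ ⊤ := by
  simp only [tsum_Apow_mul_expn] at h ⊢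
  have hz₀ : ENNReal.ofReal (Real.exp (-β)) ≠ 0 := by simp [Real.exp_pos]
  obtain ⟨v₀, hv₀⟩ : ∃ v₀, green A (ENNReal.ofReal (Real.exp (-β))) v₀ w ≠ ⊤ := by
    obtain hNW | ⟨u, hu, hfin⟩ := h
    · refine ⟨w, ?_⟩
      rw [green_self_of_notMem_NW (by simp [hNW])]
      exact ENNReal.one_ne_top
    · exact ⟨u, green_ne_top_of_reaches hz₀ (hcof.reaches_of_mem_NW hu w) hfin⟩
  exact hcof.green_ne_top hA hz₀ ENNReal.ofReal_ne_top hv₀ v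

/-- Under the standing assumptions, if `NW = ∅` or
`∑_n A^n_{uu} e^{-nβ} < ∞` for some `u ∈ NW`, then `∑_n A^n_{vw} e^{-nβ} < ∞` for all
`v, w ∈ V`. -/
theorem stmt16 [Countable V] [DecidableEq V] (A : V → V → ℝ≥0∞)
    (hst : Standing A)
    (hiv : ∀ v ∈ NW A,
      Filter.limsup (fun n : ℕ => Apow A n v v ^ ((n : ℝ)⁻¹)) Filter.atTop ≠ ⊤)
    (β : ℝ)
    (h : NW A = ∅ ∨ ∃ u ∈ NW A, ∑' n : ℕ, Apow A n u u * expn β n ≠ ⊤) :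
    ∀ v w : V, ∑' n : ℕ, Apow A n v w * expn β n ≠ ⊤ :=
  stmt16_general A hst.1 hst.2.2.1 β h
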